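/- Let R be a ring and M a left R-module. Suppose there exist a countable directed partially ordered set I and a monotone family (P_i)_{i∈I} of submodules of M with union M such that each P_i is finitely generated projective and for all i ≤ j the inclusion P_i ⊆ P_j admits an R-linear retraction. Then M is isomorphic to a direct sum ⊕_{n∈ℕ} Q_n in which every Q_n is a finitely generated projective R-module. (Module instance of Corollary 3.22: for a split exact category C, every countable admissible Ind-object is a countable direct sum of objects of C.) -/

import Mathlib

universe u

open DirectSum

/-! A countable directed index set has a monotone cofinal sequence `f`, so `M` is already the union
of the chain `P (f 0) ≤ P (f 1) ≤ ⋯`, in which each term is a direct summand of the next. Then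
`P (f 0)` and the successive complements are independent and span `M`. Each of them is a direct
summand of some `P i`, hence inherits finite generation and projectivity. -/

section Lattice

/-- `a` has a complement in the interval `[⊥, c]`. In the lattice of submodules of a module this
says that `a` is an internal direct summand of `c`. -/
def IsSummand {α : Type*} [Lattice α] [OrderBot α] (a c : α) : Prop :=
  ∃ b, Disjoint a b ∧ a ⊔ b = c

namespace IsSummand

variable {α : Type*} [Lattice α] [OrderBot α] {a b c : α}

theorem refl (a : α) : IsSummand a a :=
  ⟨⊥, disjoint_bot_right, sup_bot_eq a⟩

theorem le (h : IsSummand a c) : a ≤ c := by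
  obtain ⟨b, -, rfl⟩ := h
  exact le_sup_left

theorem of_disjoint_of_sup_eq_right (hab : Disjoint a b) (h : a ⊔ b = c) : IsSummand b c :=
  ⟨a, hab.symm, sup_comm b a ▸ h⟩

end IsSummand

theorem exists_partialSups_eq_of_isSummand {α : Type*} [Lattice α] [OrderBot α] {T : ℕ → α}
    (hT : ∀ n, IsSummand (T n) (T (n + 1))) :
    ∃ A : ℕ → α, partialSups A = T ∧ (∀ n, Disjoint (partialSups A n) (A (n + 1))) ∧
      ∀ n, IsSummand (A n) (T n) := by
  choose C hdisj hsup using hT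
  let A : ℕ → α
    | 0 => T 0
    | n + 1 => C n
  have hA : ∀ n, partialSups A n = T n := fun n => by
    induction n with
    | zero => exact partialSups_zero A
    | succ n ih => rw [partialSups_add_one, ih]; exact hsup n
  refine ⟨A, funext hA, fun n => (hA n).symm ▸ hdisj n, ?_⟩
  rintro (_ | n)
  · exact .refl _
  · exact .of_disjoint_of_sup_eq_right (hdisj n) (hsup n)

theorem supIndep_range_of_disjoint_partialSups {α : Type*} [Lattice α] [OrderBot α]
    [IsModularLattice α] {A : ℕ → α} (hA : ∀ n, Disjoint (partialSups A n) (A (n + 1))) (n : ℕ) :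
    (Finset.range n).SupIndep A := by
  induction n with
  | zero => exact Finset.supIndep_empty A
  | succ n ih =>
    rw [Finset.range_add_one]
    refine ih.insert ?_
    cases n with
    | zero => exact disjoint_bot_right
    | succ n => simpa only [partialSups_eq_sup_range] using (hA n).symm

variable {α : Type*} [CompleteLattice α] [IsModularLattice α] [IsCompactlyGenerated α]

theorem iSupIndep_of_disjoint_partialSups {A : ℕ → α}
    (hA : ∀ n, Disjoint (partialSups A n) (A (n + 1))) : iSupIndep A :=
  iSupIndep_iff_supIndep.2 fun s =>
    let ⟨n, hn⟩ := s.exists_nat_subset_range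
    (supIndep_range_of_disjoint_partialSups hA n).subset hn

theorem exists_iSupIndep_iSup_eq_of_isSummand {I : Type*} [Preorder I] [IsDirectedOrder I]
    [Countable I] [Nonempty I] {P : I → α} (hP : ∀ ⦃i j⦄, i ≤ j → IsSummand (P i) (P j)) :
    ∃ A : ℕ → α, iSupIndep A ∧ ⨆ n, A n = ⨆ i, P i ∧ ∀ n, ∃ i, IsSummand (A n) (P i) := by
  obtain ⟨f, hf, hf_tendsto⟩ := Filter.exists_seq_monotone_tendsto_atTop_atTop I
  obtain ⟨A, hA, hdisj, hsummand⟩ :=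
    exists_partialSups_eq_of_isSummand fun n => hP (hf n.le_succ)
  have hmono : Monotone P := fun _ _ h => (hP h).le
  refine ⟨A, iSupIndep_of_disjoint_partialSups hdisj, ?_, fun n => ⟨f n, hsummand n⟩⟩
  calc ⨆ n, A n = ⨆ n, partialSups A n := (iSup_partialSups_eq A).symm
    _ = ⨆ n, P (f n) := by rw [hA]
    _ = ⨆ i, P i := hmono.iSup_comp_tendsto_atTop hf_tendsto

end Lattice

section Module

variable {R M : Type*} [Ring R] [AddCommGroup M] [Module R M] {N K : Submodule R M}

theorem isSummand_iff_exists_isCompl_range_inclusion (h : N ≤ K) :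
    IsSummand N K ↔ ∃ A, IsCompl (LinearMap.range (Submodule.inclusion h)) A := by
  have hN : (LinearMap.range (Submodule.inclusion h)).map K.subtype = N := by
    rw [← LinearMap.range_comp, Submodule.subtype_comp_inclusion, Submodule.range_subtype]
  simp only [K.mapIic.isCompl_iff, Set.Iic.isCompl_iff, Submodule.coe_mapIic_apply, hN]
  constructor
  · rintro ⟨A, hdisj, hsup⟩
    obtain ⟨B, hB⟩ := K.mapIic.surjective ⟨A, le_sup_right.trans_eq hsup⟩
    obtain rfl : B.map K.subtype = A := congrArg Subtype.val hB
    exact ⟨B, hdisj, hsup⟩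
  · rintro ⟨A, hA⟩
    exact ⟨A.map K.subtype, hA⟩

theorem isSummand_iff_exists_retraction (h : N ≤ K) :
    IsSummand N K ↔ ∃ r : K →ₗ[R] N, ∀ v : N, r (Submodule.inclusion h v) = v := by
  rw [isSummand_iff_exists_isCompl_range_inclusion h]
  constructor
  · rintro ⟨A, hA⟩
    exact ⟨LinearMap.linearProjOfIsCompl A _ (Submodule.inclusion_injective h) hA,
      LinearMap.linearProjOfIsCompl_apply_left _ _ _ hA⟩
  · rintro ⟨r, hr⟩
    have hproj : LinearMap.IsProj (LinearMap.range (Submodule.inclusion h))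
        (Submodule.inclusion h ∘ₗ r) :=
      ⟨fun x => ⟨r x, rfl⟩, by rintro _ ⟨v, rfl⟩; exact congrArg (Submodule.inclusion h) (hr v)⟩
    exact ⟨_, hproj.isCompl⟩

theorem IsSummand.finite [Module.Finite R K] (h : IsSummand N K) : Module.Finite R N := by
  obtain ⟨r, hr⟩ := (isSummand_iff_exists_retraction h.le).1 h
  exact .of_surjective r fun v => ⟨_, hr v⟩

theorem IsSummand.projective [Module.Projective R K] (h : IsSummand N K) :
    Module.Projective R N := by
  obtain ⟨r, hr⟩ := (isSummand_iff_exists_retraction h.le).1 h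
  exact .of_split _ r (LinearMap.ext hr)

theorem directSum_decomposition_of_countable_admissible_ind_presentation_general
    {I : Type*} [Preorder I] [Countable I] [IsDirectedOrder I]
    {P : I → Submodule R M} (hmono : Monotone P) (hcovers : ∀ x : M, ∃ i, x ∈ P i)
    (hsplits : ∀ i j, (h : i ≤ j) →
      ∃ r : (P j) →ₗ[R] (P i), ∀ v : P i, r (Submodule.inclusion (hmono h) v) = v) :
    ∃ Q : ℕ → Submodule R M, DirectSum.IsInternal Q ∧ ∀ n, ∃ i, IsSummand (Q n) (P i) := by
  have : Nonempty I := ⟨(hcovers 0).choose⟩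
  obtain ⟨Q, hindep, hsup, hsummand⟩ := exists_iSupIndep_iSup_eq_of_isSummand
    fun i j h => (isSummand_iff_exists_retraction (hmono h)).2 (hsplits i j h)
  have htop : ⨆ i, P i = ⊤ := eq_top_iff.2 fun x _ =>
    let ⟨i, hi⟩ := hcovers x
    Submodule.mem_iSup_of_mem i hi
  exact ⟨Q, isInternal_submodule_of_iSupIndep_of_iSup_eq_top hindep (hsup.trans htop), hsummand⟩

end Module

/-- **Corollary 3.22 (module instance)**: if a left `R`-module `M` is the union of a
monotone family, indexed by a countable directed poset, of finitely generated projective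
submodules whose mutual inclusions split, then `M` is isomorphic to a countable direct
sum of finitely generated projective modules. -/
theorem directSum_decomposition_of_countable_admissible_ind_presentation
    (R : Type u) [Ring R] (M : Type u) [AddCommGroup M] [Module R M]
    (I : Type u) [PartialOrder I] [Countable I]
    (hdir : IsDirected I (· ≤ ·))
    (P : I → Submodule R M) (hmono : Monotone P)
    (hcovers : ∀ x : M, ∃ i, x ∈ P i)
    (hfg : ∀ i, (P i).FG)
    (hproj : ∀ i, Module.Projective R (P i))
    (hsplits : ∀ i j, (h : i ≤ j) →
      ∃ r : (P j) →ₗ[R] (P i), ∀ v : P i, r (Submodule.inclusion (hmono h) v) = v) :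
    ∃ Q : ℕ → ModuleCat.{u} R,
      (∀ n, Module.Finite R (Q n) ∧ Module.Projective R (Q n)) ∧
      Nonempty (M ≃ₗ[R] ⨁ n, (Q n : Type u)) := by
  obtain ⟨Q, hQ, hsummand⟩ :=
    directSum_decomposition_of_countable_admissible_ind_presentation_general hmono hcovers hsplits
  have hfin : ∀ i, Module.Finite R (P i) := fun i => .of_fg (hfg i)
  refine ⟨fun n => .of R (Q n), fun n => ?_, ⟨(LinearEquiv.ofBijective (coeLinearMap Q) hQ).symm⟩⟩
  obtain ⟨i, hi⟩ := hsummand n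
  exact ⟨hi.finite, hi.projective⟩
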